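/- Let k be a field and S a totally ordered set, viewed as a category. Every pointwise finite-dimensional persistence module M : S → Vec_k is isomorphic to a direct sum ⊕_{j ∈ Λ} k_{I_j} of interval modules for a family of intervals I_j ⊆ S. -/

import Mathlib

namespace PMod

variable (k : Type) [Field k]

/-- A persistence module over a preordered set `P` with values in `k`-vector spaces. -/
structure PersistenceModule (P : Type) [Preorder P] where
  V : P → Type
  [addCommGroup : ∀ x, AddCommGroup (V x)]
  [module : ∀ x, Module k (V x)]
  map : ∀ {x y : P}, x ≤ y → (V x →ₗ[k] V y)
  map_refl : ∀ x : P, map (le_refl x) = LinearMap.id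
  map_trans : ∀ {x y z : P} (hxy : x ≤ y) (hyz : y ≤ z),
      map (le_trans hxy hyz) = (map hyz).comp (map hxy)

attribute [instance] PersistenceModule.addCommGroup PersistenceModule.module

variable {k}

/-- A morphism of persistence modules. -/
structure Hom {P : Type} [Preorder P] (M N : PersistenceModule k P) where
  app : ∀ x, M.V x →ₗ[k] N.V x
  natural : ∀ {x y : P} (h : x ≤ y), (N.map h).comp (app x) = (app y).comp (M.map h)

/-- A morphism of persistence modules is an isomorphism iff it is pointwise bijective. -/
def IsIsoHom {P : Type} [Preorder P] {M N : PersistenceModule k P} (f : Hom M N) : Prop :=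
  ∀ x, Function.Bijective (f.app x)

/-- Two persistence modules are isomorphic if there is a pointwise bijective
morphism between them. -/
def Isomorphic {P : Type} [Preorder P] (M N : PersistenceModule k P) : Prop :=
  ∃ f : Hom M N, IsIsoHom f

/-- The direct sum of a family of persistence modules, taken pointwise
(`Π₀` is the finitely supported product, i.e. the direct sum). -/
noncomputable def directSum {P : Type} [Preorder P] {ι : Type}
    (N : ι → PersistenceModule k P) : PersistenceModule k P where
  V x := Π₀ i, (N i).V x
  map {x y} h := DFinsupp.mapRange.linearMap (fun i => (N i).map h)
  map_refl x := by
    have h : (fun i => (N i).map (le_refl x)) =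
        fun i => (LinearMap.id : (N i).V x →ₗ[k] (N i).V x) :=
      funext fun i => (N i).map_refl x
    rw [h]
    exact DFinsupp.mapRange.linearMap_id
  map_trans {x y z} hxy hyz := by
    have h : (fun i => (N i).map (le_trans hxy hyz)) =
        fun i => ((N i).map hyz).comp ((N i).map hxy) :=
      funext fun i => (N i).map_trans hxy hyz
    rw [h]
    exact DFinsupp.mapRange.linearMap_comp _ _

/-- The binary direct sum of two persistence modules, taken pointwise. -/
def sum2 {P : Type} [Preorder P] (M N : PersistenceModule k P) : PersistenceModule k P where
  V x := M.V x × N.V x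
  map h := (M.map h).prodMap (N.map h)
  map_refl x := by
    rw [M.map_refl, N.map_refl]
    exact LinearMap.prodMap_id
  map_trans hxy hyz := by
    rw [M.map_trans hxy hyz, N.map_trans hxy hyz]
    exact (LinearMap.prodMap_comp _ _ _ _).symm

/-- The zero persistence module predicate. -/
def IsZero {P : Type} [Preorder P] (M : PersistenceModule k P) : Prop :=
  ∀ x, ∀ v : M.V x, v = 0

/-- A persistence module is indecomposable if it is nonzero and whenever it is
isomorphic to a direct sum of two modules, one of the summands is zero. -/
def Indecomposable {P : Type} [Preorder P] (M : PersistenceModule k P) : Prop :=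
  ¬ IsZero M ∧ ∀ M' M'' : PersistenceModule k P,
    Isomorphic M (sum2 M' M'') → IsZero M' ∨ IsZero M''

variable (k)

/-- A subset of a preordered set is convex. -/
def IsConvex {P : Type} [Preorder P] (I : Set P) : Prop :=
  ∀ p q r : P, p ≤ q → q ≤ r → p ∈ I → r ∈ I → q ∈ I

open Classical in
/-- The fibre of the interval module `k_I` at `x`: a copy of `k` if `x ∈ I`, else `0`. -/
noncomputable def kMod {P : Type} [Preorder P] (I : Set P) (x : P) : Submodule k k :=
  if x ∈ I then ⊤ else ⊥

/-- The canonical generator of the fibre of the interval module at a point of `I`. -/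
noncomputable def kGen {P : Type} [Preorder P] {I : Set P} {x : P} (hx : x ∈ I) :
    kMod k I x :=
  ⟨1, by simp [kMod, hx]⟩

open Classical in
/-- The structure maps of the interval module. -/
noncomputable def intervalMap {P : Type} [Preorder P] (I : Set P) {x y : P} (_ : x ≤ y) :
    kMod k I x →ₗ[k] kMod k I y where
  toFun m := if hy : y ∈ I then ⟨(m : k), by simp [kMod, hy]⟩ else 0
  map_add' a b := by
    by_cases hy : y ∈ I <;> simp [hy]
  map_smul' c a := by
    by_cases hy : y ∈ I <;> simp [hy]

theorem kMod_coe_eq_zero {P : Type} [Preorder P] {I : Set P} {x : P} (hx : x ∉ I)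
    (m : kMod k I x) : (m : k) = 0 := by
  have hm := m.2
  simp only [kMod, if_neg hx, Submodule.mem_bot] at hm
  exact hm

/-- The interval module `k_I` of a convex subset `I ⊆ P`: one-dimensional with
identity structure maps on `I`, and zero outside of `I`. -/
noncomputable def intervalModule {P : Type} [Preorder P] (I : Set P) (hI : IsConvex I) :
    PersistenceModule k P where
  V x := kMod k I x
  map h := intervalMap k I h
  map_refl x := by
    ext m
    by_cases hx : x ∈ I
    · simp [intervalMap, hx]
    · simp [intervalMap, hx, kMod_coe_eq_zero k hx m]
  map_trans {x y z} hxy hyz := by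
    ext m
    by_cases hz : z ∈ I
    · by_cases hy : y ∈ I
      · simp [intervalMap, hz, hy]
      · have hx : x ∉ I := fun hx => hy (hI x y z hxy hyz hx hz)
        simp [intervalMap, hz, hy, kMod_coe_eq_zero k hx m]
    · by_cases hy : y ∈ I <;> simp [intervalMap, hz, hy]

/-- The constant persistence module `k_P` with value `k` everywhere. -/
def constModule (P : Type) [Preorder P] : PersistenceModule k P where
  V _ := k
  map _ := LinearMap.id
  map_refl _ := rfl
  map_trans _ _ := rfl

variable {k}

/-- Connectedness of a subset of a preordered set: any two points are joined by
a finite zigzag of comparable points inside the subset. -/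
def IsConn {P : Type} [Preorder P] (I : Set P) : Prop :=
  ∀ p ∈ I, ∀ q ∈ I, ∃ (n : ℕ) (r : ℕ → P), r 0 = p ∧ r n = q ∧ (∀ i ≤ n, r i ∈ I) ∧
    ∀ i < n, r i ≤ r (i + 1) ∨ r (i + 1) ≤ r i

/-- An interval in a poset: a nonempty convex connected subset. -/
def IsInterval {P : Type} [Preorder P] (I : Set P) : Prop :=
  I.Nonempty ∧ IsConvex I ∧ IsConn I

/-- An ideal: a subset closed under going down. -/
def IsIdeal {P : Type} [Preorder P] (I : Set P) : Prop :=
  ∀ p q : P, p ≤ q → q ∈ I → p ∈ I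

/-- A filter: a subset closed under going up. -/
def IsFilter {P : Type} [Preorder P] (I : Set P) : Prop :=
  ∀ p q : P, p ≤ q → p ∈ I → q ∈ I

/-- An interval in a totally ordered set: a nonempty convex subset. -/
def IsIntervalLin {P : Type} [Preorder P] (I : Set P) : Prop :=
  I.Nonempty ∧ IsConvex I

theorem IsConvex.prod {S T : Type} [Preorder S] [Preorder T] {A : Set S} {B : Set T}
    (hA : IsConvex A) (hB : IsConvex B) : IsConvex (A ×ˢ B) := by
  intro p q r hpq hqr hp hr
  exact ⟨hA _ _ _ hpq.1 hqr.1 hp.1 hr.1, hB _ _ _ hpq.2 hqr.2 hp.2 hr.2⟩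

theorem isConvex_univ {P : Type} [Preorder P] : IsConvex (Set.univ : Set P) :=
  fun _ _ _ _ _ _ _ => trivial

/-- A block in the product of two totally ordered sets. -/
def IsBlock {S T : Type} [LinearOrder S] [LinearOrder T] (I : Set (S × T)) : Prop :=
  I.Nonempty ∧ (
    (∃ JS JT, IsIntervalLin JS ∧ IsIdeal JS ∧ IsIntervalLin JT ∧ IsIdeal JT ∧ I = JS ×ˢ JT) ∨
    (∃ JS JT, IsIntervalLin JS ∧ IsFilter JS ∧ IsIntervalLin JT ∧ IsFilter JT ∧ I = JS ×ˢ JT) ∨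
    (∃ JS, IsIntervalLin JS ∧ I = JS ×ˢ (Set.univ : Set T)) ∨
    (∃ JT, IsIntervalLin JT ∧ I = (Set.univ : Set S) ×ˢ JT))

theorem IsBlock.isConvex {S T : Type} [LinearOrder S] [LinearOrder T] {I : Set (S × T)}
    (h : IsBlock I) : IsConvex I := by
  obtain ⟨-, h | h | h | h⟩ := h
  · obtain ⟨JS, JT, hS, -, hT, -, rfl⟩ := h
    exact hS.2.prod hT.2
  · obtain ⟨JS, JT, hS, -, hT, -, rfl⟩ := h
    exact hS.2.prod hT.2
  · obtain ⟨JS, hS, rfl⟩ := h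
    exact hS.2.prod isConvex_univ
  · obtain ⟨JT, hT, rfl⟩ := h
    exact isConvex_univ.prod hT.2

/-- Convexity is inherited by preimages in a subposet. -/
theorem IsConvex.preimage {P : Type} [Preorder P] {J : Set P} (hJ : IsConvex J)
    (Q : Set P) : IsConvex {p : Q | (p : P) ∈ J} :=
  fun p q r hpq hqr hp hr => hJ p q r hpq hqr hp hr

/-- The restriction of a persistence module to a subposet. -/
def restrict {P : Type} [Preorder P] (M : PersistenceModule k P) (Q : Set P) :
    PersistenceModule k Q where
  V q := M.V q
  map h := M.map h
  map_refl q := M.map_refl q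
  map_trans hxy hyz := M.map_trans hxy hyz

/-- Middle exactness for persistence modules over a product of two totally ordered sets:
for every rectangle `a = (x,y) ≤ b = (x,y'), c = (x',y) ≤ d = (x',y')` the sequence
`M_a → M_b ⊕ M_c → M_d` is exact at `M_b ⊕ M_c`. -/
def MiddleExact {S T : Type} [Preorder S] [Preorder T]
    (M : PersistenceModule k (S × T)) : Prop :=
  ∀ (x x' : S) (y y' : T) (hx : x ≤ x') (hy : y ≤ y')
    (mb : M.V (x, y')) (mc : M.V (x', y)),
    M.map (show (x, y') ≤ (x', y') from ⟨hx, le_refl y'⟩) mb =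
      M.map (show (x', y) ≤ (x', y') from ⟨le_refl x', hy⟩) mc →
    ∃ ma : M.V (x, y),
      M.map (show (x, y) ≤ (x, y') from ⟨le_refl x, hy⟩) ma = mb ∧
      M.map (show (x, y) ≤ (x', y) from ⟨hx, le_refl y⟩) ma = mc


theorem IsIdeal.isConvex {P : Type} [Preorder P] {I : Set P} (h : IsIdeal I) : IsConvex I :=
  fun _ q r _ hqr _ hr => h q r hqr hr

theorem IsFilter.isConvex {P : Type} [Preorder P] {I : Set P} (h : IsFilter I) : IsConvex I :=
  fun p q _ hpq _ hp _ => h p q hpq hp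


/-- Convexity of the preimage of a convex subset of `T` in a subposet of `S × T`. -/
theorem IsConvex.preimageSnd {S T : Type} [Preorder S] [Preorder T] {J : Set T}
    (hJ : IsConvex J) (Q : Set (S × T)) : IsConvex {p : ↥Q | (p : S × T).2 ∈ J} :=
  fun p q r hpq hqr hp hr =>
    hJ _ _ _ (Subtype.coe_le_coe.mpr hpq).2 (Subtype.coe_le_coe.mpr hqr).2 hp hr

end PMod

namespace PMod

/-- Compatible extension of a functional along a totally ordered direct system. -/
theorem exists_functional {k : Type} [Field k] {T : Type} [LinearOrder T]
    (V : T → Type) [∀ x, AddCommGroup (V x)] [∀ x, Module k (V x)]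
    (F : ∀ i j : T, i ≤ j → V i →ₗ[k] V j)
    (h1 : ∀ i (h : i ≤ i) v, F i i h v = v)
    (h2 : ∀ i j l (hij : i ≤ j) (hjl : j ≤ l) v,
      F j l hjl (F i j hij v) = F i l (hij.trans hjl) v)
    (x : T) (f : Module.Dual k (V x))
    (hf : ∀ z (h : x ≤ z) (w : V x), F x z h w = 0 → f w = 0) :
    ∃ g : ∀ z, Module.Dual k (V z), g x = f ∧
      ∀ y z (h : y ≤ z) (w : V y), g z (F y z h w) = g y w := by
  classical
  have : DirectedSystem V (fun i j h => F i j h) :=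
    ⟨fun i v => h1 i _ v, fun i j l hij hjl v => h2 _ _ _ _ _ _⟩
  have : Nonempty T := ⟨x⟩
  let φ := Module.DirectLimit.of k T V F x
  have h1 : f ∈ LinearMap.range φ.dualMap := by
    rw [LinearMap.range_dualMap_eq_dualAnnihilator_ker, Submodule.mem_dualAnnihilator]
    intro w hw
    obtain ⟨j, hj, h0⟩ := Module.DirectLimit.of.zero_exact (LinearMap.mem_ker.mp hw)
    exact hf j hj w h0
  obtain ⟨G, hG⟩ := h1
  refine ⟨fun z => G.comp (Module.DirectLimit.of k T V F z), hG, ?_⟩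
  intro y z h w
  have := Module.DirectLimit.of_f (R := k) (G := V) (f := F) (hij := h) (x := w)
  simp only [LinearMap.comp_apply]
  exact congrArg G this

/-- Compatible lift of a vector lying in all images. -/
theorem exists_section {k : Type} [Field k] {T : Type} [LinearOrder T]
    (V : T → Type) [∀ x, AddCommGroup (V x)] [∀ x, Module k (V x)]
    (F : ∀ i j : T, i ≤ j → V i →ₗ[k] V j)
    (h1 : ∀ i (h : i ≤ i) v, F i i h v = v)
    (h2 : ∀ i j l (hij : i ≤ j) (hjl : j ≤ l) v,
      F j l hjl (F i j hij v) = F i l (hij.trans hjl) v)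
    (hfd : ∀ x, FiniteDimensional k (V x)) (x : T) (v : V x)
    (hv : ∀ z (h : z ≤ x), ∃ w, F z x h w = v) :
    ∃ s : ∀ z, V z, s x = v ∧ ∀ y z (h : y ≤ z), F y z h (s y) = s z := by
  obtain ⟨g, hg, hc⟩ : ∃ g : ∀ z, Module.Dual k (Module.Dual k (V z)),
      g x = Module.Dual.eval k (V x) v ∧
      ∀ y z (h : y ≤ z) (w : Module.Dual k (V z)), g y (w.comp (F y z h)) = g z w := by
    obtain ⟨g, hg, hc⟩ := exists_functional (T := Tᵒᵈ)
      (fun y => Module.Dual k (V (OrderDual.ofDual y)))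
      (fun i j h => (F (OrderDual.ofDual j) (OrderDual.ofDual i) h).dualMap)
      (fun i h w => by
        apply LinearMap.ext
        intro u
        exact congrArg w (h1 _ _ u))
      (fun i j l hij hjl w => by
        apply LinearMap.ext
        intro u
        exact congrArg w (h2 _ _ _ hjl hij u))
      (OrderDual.toDual x) (Module.Dual.eval k (V x) v) (by
        intro z h w hw
        obtain ⟨u, hu⟩ := hv (OrderDual.ofDual z) h
        have h2 := LinearMap.congr_fun hw u
        exact (congrArg w hu).symm.trans h2)
    exact ⟨fun z => g (OrderDual.toDual z), hg,
      fun y z h w => hc (OrderDual.toDual z) (OrderDual.toDual y) h w⟩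
  refine ⟨fun z => (Module.evalEquiv k (V z)).symm (g z), ?_, ?_⟩
  · simp only [hg]
    rw [LinearEquiv.symm_apply_eq]; rfl
  · intro y z h
    apply (Module.evalEquiv k (V z)).injective
    simp only [LinearEquiv.apply_symm_apply]
    apply LinearMap.ext
    intro w
    refine Eq.trans ?_ (hc y z h w)
    exact LinearMap.congr_fun ((Module.evalEquiv k (V y)).apply_symm_apply (g y))
      (w.comp (F y z h))

/-- A bar: an interval summand, given by a section and a retraction. -/
structure Bar {k : Type} [Field k] {S : Type} [LinearOrder S] (M : PersistenceModule k S) where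
  I : Set S
  s : ∀ y, M.V y
  f : ∀ y, Module.Dual k (M.V y)
  ne : I.Nonempty
  s0 : ∀ y, y ∉ I → s y = 0
  f0 : ∀ y, y ∉ I → f y = 0
  fs : ∀ y, y ∈ I → f y (s y) = 1
  hs : ∀ y z (h : y ≤ z), y ∈ I → M.map h (s y) = s z
  hf : ∀ y z (h : y ≤ z), z ∈ I → ∀ m, f z (M.map h m) = f y m

theorem PersistenceModule.map_map {k : Type} [Field k] {S : Type} [LinearOrder S]
    (M : PersistenceModule k S) {x y z : S} (hxy : x ≤ y) (hyz : y ≤ z) (m : M.V x) :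
    M.map hyz (M.map hxy m) = M.map (hxy.trans hyz) m := by
  rw [M.map_trans hxy hyz]; rfl

theorem PersistenceModule.map_self {k : Type} [Field k] {S : Type} [LinearOrder S]
    (M : PersistenceModule k S) {x : S} (h : x ≤ x) (m : M.V x) :
    M.map h m = m := by
  rw [M.map_refl]; rfl

theorem ker_mono {k : Type} [Field k] {S : Type} [LinearOrder S]
    (M : PersistenceModule k S) {x y z : S} (hxy : x ≤ y) (hyz : y ≤ z) :
    LinearMap.ker (M.map hxy) ≤ LinearMap.ker (M.map (hxy.trans hyz)) := by
  intro m hm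
  rw [LinearMap.mem_ker] at hm ⊢
  rw [← M.map_map hxy hyz, hm, map_zero]

theorem range_mono {k : Type} [Field k] {S : Type} [LinearOrder S]
    (M : PersistenceModule k S) {x y z : S} (hxy : x ≤ y) (hyz : y ≤ z) :
    LinearMap.range (M.map (hxy.trans hyz)) ≤ LinearMap.range (M.map hyz) := by
  rintro _ ⟨m, rfl⟩
  exact ⟨M.map hxy m, M.map_map _ _ _⟩

theorem exists_bar {k : Type} [Field k] {S : Type} [LinearOrder S]
    (N : PersistenceModule k S) (hfd : ∀ x, FiniteDimensional k (N.V x))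
    (x : S) (v0 : N.V x) (hv0 : v0 ≠ 0) : Nonempty (Bar N) := by
  classical
  have hnt : (⊤ : Submodule k (N.V x)) ≠ ⊥ := by
    intro h
    exact hv0 ((Submodule.mem_bot k).mp (h ▸ Submodule.mem_top))
  -- smallest nonzero kernel
  obtain ⟨K, hK0, hK⟩ : ∃ K : Submodule k (N.V x), K ≠ ⊥ ∧
      ∀ z (h : x ≤ z), LinearMap.ker (N.map h) ≠ ⊥ → K ≤ LinearMap.ker (N.map h) := by
    obtain ⟨K, ⟨hK0, hK1⟩, hmin⟩ := (wellFounded_lt (α := Submodule k (N.V x))).has_min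
      {W | W ≠ ⊥ ∧ (W = ⊤ ∨ ∃ z, ∃ h : x ≤ z, W = LinearMap.ker (N.map h))}
      ⟨⊤, hnt, Or.inl rfl⟩
    refine ⟨K, hK0, fun z h hz => ?_⟩
    have h2 := hmin (LinearMap.ker (N.map h)) ⟨hz, Or.inr ⟨z, h, rfl⟩⟩
    rcases hK1 with rfl | ⟨z', h', rfl⟩
    · by_contra hc
      exact h2 (lt_of_le_of_ne le_top (fun e => hc (e ▸ le_rfl)))
    · rcases le_total z' z with hzz | hzz
      · exact ker_mono N h' hzz
      · by_contra hc
        exact h2 (lt_of_le_not_ge (ker_mono N h hzz) hc)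
  -- smallest image meeting it
  obtain ⟨R, hR0, hR⟩ : ∃ R : Submodule k (N.V x), R ⊓ K ≠ ⊥ ∧
      ∀ y (h : y ≤ x), LinearMap.range (N.map h) ⊓ K ≠ ⊥ → R ≤ LinearMap.range (N.map h) := by
    obtain ⟨R, ⟨hR0, y', h', rfl⟩, hmin⟩ :=
      (wellFounded_lt (α := Submodule k (N.V x))).has_min
      {W | W ⊓ K ≠ ⊥ ∧ ∃ z, ∃ h : z ≤ x, W = LinearMap.range (N.map h)}
      ⟨LinearMap.range (N.map (le_refl x)), by
        rw [N.map_refl, LinearMap.range_id, top_inf_eq]; exact hK0, x, le_refl x, rfl⟩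
    refine ⟨_, hR0, fun y h hy => ?_⟩
    have h2 := hmin (LinearMap.range (N.map h)) ⟨hy, y, h, rfl⟩
    rcases le_total y' y with hyy | hyy
    · exact range_mono N hyy h
    · by_contra hc
      exact h2 (lt_of_le_not_ge (range_mono N hyy h') hc)
  obtain ⟨v, ⟨hvR, hvK⟩, hv⟩ := (Submodule.ne_bot_iff _).mp hR0
  -- largest image not meeting it
  obtain ⟨R', hvR', hR'⟩ : ∃ R' : Submodule k (N.V x), v ∉ R' ∧
      ∀ y (h : y ≤ x), LinearMap.range (N.map h) ⊓ K = ⊥ → LinearMap.range (N.map h) ≤ R' := by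
    obtain ⟨R', hR1, hmax⟩ :=
      (wellFounded_gt (α := Submodule k (N.V x))).has_min
      {W | W = ⊥ ∨ ∃ z, ∃ h : z ≤ x, LinearMap.range (N.map h) ⊓ K = ⊥ ∧
        W = LinearMap.range (N.map h)} ⟨⊥, Or.inl rfl⟩
    refine ⟨R', ?_, fun y h hy => ?_⟩
    · rcases hR1 with rfl | ⟨z, h, h0, rfl⟩
      · simpa using hv
      · intro hc
        exact hv ((Submodule.mem_bot k).mp (h0 ▸ ⟨hc, hvK⟩))
    · have h2 := hmax (LinearMap.range (N.map h)) (Or.inr ⟨y, h, hy, rfl⟩)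
      rcases hR1 with rfl | ⟨z, h', h0, rfl⟩
      · by_contra hc
        exact h2 (lt_of_le_of_ne bot_le (fun e => hc (e ▸ le_rfl)))
      · rcases le_total y z with hyy | hyy
        · exact range_mono N hyy h'
        · by_contra hc
          exact h2 (lt_of_le_not_ge (range_mono N hyy h) hc)
  obtain ⟨φ, hφv, hφ⟩ : ∃ φ : Module.Dual k (N.V x), φ v = 1 ∧ ∀ r ∈ R', φ r = 0 := by
    obtain ⟨φ, h1, h2⟩ := Submodule.exists_le_ker_of_notMem hvR'
    refine ⟨(φ v)⁻¹ • φ, ?_, fun r hr => ?_⟩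
    · simp [h1]
    · have : φ r = 0 := h2 hr
      simp [this]
  let I : Set S := {y | (∃ h : y ≤ x, LinearMap.range (N.map h) ⊓ K ≠ ⊥) ∨
    (∃ h : x ≤ y, LinearMap.ker (N.map h) = ⊥)}
  have hIle : ∀ y ∈ I, ∀ h : y ≤ x, LinearMap.range (N.map h) ⊓ K ≠ ⊥ := by
    rintro y (⟨_, h2⟩ | ⟨h1, _⟩) h
    · exact h2
    · obtain rfl := le_antisymm h h1
      rw [N.map_refl, LinearMap.range_id, top_inf_eq]; exact hK0
  have hIge : ∀ y ∈ I, ∀ h : x ≤ y, LinearMap.ker (N.map h) = ⊥ := by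
    rintro y (⟨h1, _⟩ | ⟨_, h2⟩) h
    · obtain rfl := le_antisymm h h1
      rw [N.map_refl, LinearMap.ker_id]
    · exact h2
  have hxI : x ∈ I := Or.inr ⟨le_rfl, by rw [N.map_refl, LinearMap.ker_id]⟩
  obtain ⟨g, hgx, hg⟩ := exists_functional (fun y : I => N.V y)
    (fun i j h => N.map h) (fun i h v => N.map_self _ v) (fun i j l hij hjl v => N.map_map _ _ v)
    ⟨x, hxI⟩ φ (by
    intro z h w hw
    have h1 := hIge z z.2 h
    have h2 : w ∈ LinearMap.ker (N.map (show x ≤ z from h)) := hw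
    rw [h1, Submodule.mem_bot] at h2
    rw [h2]; exact map_zero φ)
  obtain ⟨t, htx, ht⟩ := exists_section (fun y : I => N.V y)
    (fun i j h => N.map h) (fun i h v => N.map_self _ v) (fun i j l hij hjl v => N.map_map _ _ v)
    (fun y => hfd y) ⟨x, hxI⟩ v (by
    intro z h
    exact hR z h (hIle z z.2 h) hvR)
  have hg' : ∀ y z (hy : y ∈ I) (hz : z ∈ I) (h : y ≤ z) (m : N.V y),
      (g ⟨z, hz⟩ : Module.Dual k (N.V z)) (N.map h m) =
        (g ⟨y, hy⟩ : Module.Dual k (N.V y)) m := fun y z hy hz h m => hg ⟨y, hy⟩ ⟨z, hz⟩ h m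
  have ht' : ∀ y z (hy : y ∈ I) (hz : z ∈ I) (h : y ≤ z),
      N.map h (t ⟨y, hy⟩ : N.V y) = (t ⟨z, hz⟩ : N.V z) :=
    fun y z hy hz h => ht ⟨y, hy⟩ ⟨z, hz⟩ h
  refine ⟨⟨I, fun y => if h : y ∈ I then t ⟨y, h⟩ else 0,
    fun y => if h : y ∈ I then g ⟨y, h⟩ else 0, ⟨x, hxI⟩, ?_, ?_, ?_, ?_, ?_⟩⟩
  · intro y hy; simp [hy]
  · intro y hy; simp [hy]
  · intro y hy
    simp only [hy, dif_pos]
    have hx1 : (g ⟨x, hxI⟩ : Module.Dual k (N.V x)) (t ⟨x, hxI⟩ : N.V x) = 1 := by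
      rw [hgx, htx]; exact hφv
    rcases le_total y x with h | h
    · rw [← hx1, ← ht' y x hy hxI h]
      exact (hg' y x hy hxI h _).symm
    · rw [← hx1, ← ht' x y hxI hy h]
      exact hg' x y hxI hy h _
  · intro y z h hy
    by_cases hz : z ∈ I
    · simp only [hy, hz, dif_pos]
      exact ht' y z hy hz h
    · simp only [hy, hz, dif_pos, dif_neg, not_false_eq_true]
      have hxz : x ≤ z := by
        by_contra hc
        have hzx : z ≤ x := (not_le.mp hc).le
        refine hz (Or.inl ⟨hzx, fun h0 => hIle y hy (h.trans hzx) ?_⟩)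
        exact le_bot_iff.mp (h0 ▸ inf_le_inf_right K (range_mono N h hzx))
      have hvz : N.map hxz v = 0 :=
        hK z hxz (fun h0 => hz (Or.inr ⟨hxz, h0⟩)) hvK
      rcases le_total y x with hyx | hyx
      · rw [← N.map_map hyx hxz, ht' y x hy hxI hyx, htx]; exact hvz
      · rw [← ht' x y hxI hy hyx, N.map_map, htx]; exact hvz
  · intro y z h hz m
    by_cases hy : y ∈ I
    · simp only [hy, hz, dif_pos]
      exact hg' y z hy hz h m
    · simp only [hy, hz, dif_pos, dif_neg, not_false_eq_true, LinearMap.zero_apply]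
      have hyx : y ≤ x := by
        by_contra hc
        have hxy : x ≤ y := (not_le.mp hc).le
        refine hy (Or.inr ⟨hxy, ?_⟩)
        exact le_bot_iff.mp (hIge z hz (hxy.trans h) ▸ ker_mono N hxy h)
      have hm : φ (N.map hyx m) = 0 := by
        apply hφ
        apply hR' y hyx _ ⟨m, rfl⟩
        by_contra h0
        exact hy (Or.inl ⟨hyx, h0⟩)
      rcases le_total z x with hzx | hzx
      · rw [← hg' z x hz hxI hzx, N.map_map, hgx]; exact hm
      · rw [← N.map_map hyx hzx, hg' x z hxI hz hzx, hgx]; exact hm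

theorem Bar.convex {k : Type} [Field k] {S : Type} [LinearOrder S]
    {M : PersistenceModule k S} (b : Bar M) : IsConvex b.I := by
  intro p q r hpq hqr hp hr
  by_contra hq
  have h1 := b.hs p r (hpq.trans hqr) hp
  rw [← M.map_map hpq hqr, b.hs p q hpq hp, b.s0 q hq, map_zero] at h1
  have := b.fs r hr
  rw [← h1, map_zero] at this
  exact zero_ne_one this

/-- Orthogonality of bars. -/
def Orth {k : Type} [Field k] {S : Type} [LinearOrder S]
    {M : PersistenceModule k S} (b c : Bar M) : Prop :=
  ∀ y, b.f y (c.s y) = 0 ∧ c.f y (b.s y) = 0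

theorem finite_bars {k : Type} [Field k] {S : Type} [LinearOrder S]
    {M : PersistenceModule k S} (hfd : ∀ x, FiniteDimensional k (M.V x))
    (B : Set (Bar M)) (hB : B.Pairwise Orth) (y : S) :
    {b : B | y ∈ b.1.I}.Finite := by
  classical
  have hli : LinearIndependent k (fun b : {b : B | y ∈ b.1.I} => b.1.1.s y) := by
    rw [linearIndependent_iff']
    intro t c hc b hb
    have h1 := congrArg (b.1.1.f y) hc
    rw [map_sum, map_zero, Finset.sum_eq_single b] at h1
    · simpa [b.1.1.fs y b.2] using h1
    · intro d _ hd
      have : (b.1.1 : Bar M) ≠ d.1.1 := fun e => hd (Subtype.ext (Subtype.ext e.symm))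
      simp [(hB b.1.2 d.1.2 this y).1]
    · intro h; exact absurd hb h
  have := hfd y
  have : Finite {b : B | y ∈ b.1.I} := hli.finite
  exact Set.toFinite _

/-- The vectors killed by all bars. -/
def rest {k : Type} [Field k] {S : Type} [LinearOrder S]
    (M : PersistenceModule k S) (B : Set (Bar M)) (y : S) : Submodule k (M.V y) :=
  ⨅ b : B, LinearMap.ker (b.1.f y)

theorem mem_rest {k : Type} [Field k] {S : Type} [LinearOrder S]
    {M : PersistenceModule k S} {B : Set (Bar M)} {y : S} {m : M.V y} :
    m ∈ rest M B y ↔ ∀ b ∈ B, b.f y m = 0 := by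
  simp [rest]

/-- `rest` as a persistence module. -/
def restMod {k : Type} [Field k] {S : Type} [LinearOrder S]
    (M : PersistenceModule k S) (B : Set (Bar M)) : PersistenceModule k S where
  V y := rest M B y
  map {x y} h := (M.map h).restrict (fun m hm => by
    rw [mem_rest] at hm ⊢
    intro b hb
    by_cases hy : y ∈ b.I
    · rw [b.hf x y h hy, hm b hb]
    · rw [b.f0 y hy]; rfl)
  map_refl x := by
    ext m
    simp [M.map_refl]
  map_trans {x y z} hxy hyz := by
    ext m
    simp [M.map_map]

/-- The inclusion of the complement. -/
def restIncl {k : Type} [Field k] {S : Type} [LinearOrder S]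
    (M : PersistenceModule k S) (B : Set (Bar M)) (y : S) : (restMod M B).V y →ₗ[k] M.V y :=
  (rest M B y).subtype

/-- The projection onto the span of the bars. -/
noncomputable def proj {k : Type} [Field k] {S : Type} [LinearOrder S]
    {M : PersistenceModule k S} (hfd : ∀ x, FiniteDimensional k (M.V x))
    (B : Set (Bar M)) (hB : B.Pairwise Orth) (y : S) : M.V y →ₗ[k] M.V y :=
  ∑ b ∈ (finite_bars hfd B hB y).toFinset, (b.1.f y).smulRight (b.1.s y)

theorem proj_apply {k : Type} [Field k] {S : Type} [LinearOrder S]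
    {M : PersistenceModule k S} (hfd : ∀ x, FiniteDimensional k (M.V x))
    (B : Set (Bar M)) (hB : B.Pairwise Orth) (y : S) (m : M.V y) (F : Finset B)
    (hF : (finite_bars hfd B hB y).toFinset ⊆ F) :
    proj hfd B hB y m = ∑ b ∈ F, b.1.f y m • b.1.s y := by
  rw [proj, LinearMap.sum_apply]
  simp only [LinearMap.smulRight_apply]
  apply Finset.sum_subset hF
  intro b _ hb
  have : y ∉ b.1.I := by simpa using hb
  simp [b.1.s0 y this]

theorem proj_natural {k : Type} [Field k] {S : Type} [LinearOrder S]
    {M : PersistenceModule k S} (hfd : ∀ x, FiniteDimensional k (M.V x))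
    (B : Set (Bar M)) (hB : B.Pairwise Orth) (y z : S) (h : y ≤ z) (m : M.V y) :
    proj hfd B hB z (M.map h m) = M.map h (proj hfd B hB y m) := by
  classical
  rw [proj_apply hfd B hB z _ _ (Finset.subset_union_left
      (s₂ := (finite_bars hfd B hB y).toFinset)),
    proj_apply hfd B hB y _ _ (Finset.subset_union_right
      (s₁ := (finite_bars hfd B hB z).toFinset)), map_sum]
  refine Finset.sum_congr rfl fun b _ => ?_
  rw [map_smul]
  by_cases hy : y ∈ b.1.I
  · rw [b.1.hs y z h hy]
    by_cases hz : z ∈ b.1.I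
    · rw [b.1.hf y z h hz]
    · rw [b.1.s0 z hz, smul_zero, smul_zero]
  · rw [b.1.s0 y hy, map_zero, smul_zero]
    by_cases hz : z ∈ b.1.I
    · rw [b.1.hf y z h hz, b.1.f0 y hy]; simp
    · rw [b.1.s0 z hz, smul_zero]

theorem proj_s {k : Type} [Field k] {S : Type} [LinearOrder S]
    {M : PersistenceModule k S} (hfd : ∀ x, FiniteDimensional k (M.V x))
    (B : Set (Bar M)) (hB : B.Pairwise Orth) (y : S) (b : Bar M) (hb : b ∈ B) :
    proj hfd B hB y (b.s y) = b.s y := by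
  classical
  by_cases hy : y ∈ b.I
  · rw [proj_apply hfd B hB y _ _ le_rfl, Finset.sum_eq_single ⟨b, hb⟩]
    · rw [b.fs y hy, one_smul]
    · intro d _ hd
      have : d.1 ≠ b := fun e => hd (Subtype.ext e)
      rw [(hB d.2 hb this y).1, zero_smul]
    · intro h
      exact absurd (by simpa using hy) h
  · rw [b.s0 y hy, map_zero]

theorem sub_proj_mem {k : Type} [Field k] {S : Type} [LinearOrder S]
    {M : PersistenceModule k S} (hfd : ∀ x, FiniteDimensional k (M.V x))
    (B : Set (Bar M)) (hB : B.Pairwise Orth) (y : S) (m : M.V y) :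
    m - proj hfd B hB y m ∈ rest M B y := by
  classical
  rw [mem_rest]
  intro b hb
  by_cases hy : y ∈ b.I
  · rw [map_sub, proj_apply hfd B hB y _ _ le_rfl, map_sum, Finset.sum_eq_single ⟨b, hb⟩]
    · rw [map_smul, b.fs y hy]; simp
    · intro d _ hd
      have : d.1 ≠ b := fun e => hd (Subtype.ext e)
      rw [map_smul, (hB d.2 hb this y).2, smul_zero]
    · intro h
      exact absurd (by simpa using hy) h
  · rw [b.f0 y hy]; rfl

theorem proj_rest {k : Type} [Field k] {S : Type} [LinearOrder S]
    {M : PersistenceModule k S} (hfd : ∀ x, FiniteDimensional k (M.V x))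
    (B : Set (Bar M)) (hB : B.Pairwise Orth) (y : S) (m : M.V y) (hm : m ∈ rest M B y) :
    proj hfd B hB y m = 0 := by
  rw [proj_apply hfd B hB y _ _ le_rfl]
  refine Finset.sum_eq_zero fun b _ => ?_
  rw [mem_rest.mp hm b.1 b.2, zero_smul]

/-- The complementary projection, corestricted. -/
noncomputable def coproj {k : Type} [Field k] {S : Type} [LinearOrder S]
    {M : PersistenceModule k S} (hfd : ∀ x, FiniteDimensional k (M.V x))
    (B : Set (Bar M)) (hB : B.Pairwise Orth) (y : S) : M.V y →ₗ[k] (restMod M B).V y :=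
  LinearMap.codRestrict (rest M B y) (LinearMap.id - proj hfd B hB y)
    (fun m => sub_proj_mem hfd B hB y m)

/-- A bar of the complement gives a bar of the whole module. -/
noncomputable def liftBar {k : Type} [Field k] {S : Type} [LinearOrder S]
    {M : PersistenceModule k S} (hfd : ∀ x, FiniteDimensional k (M.V x))
    (B : Set (Bar M)) (hB : B.Pairwise Orth) (c : Bar (restMod M B)) : Bar M where
  I := c.I
  s y := restIncl M B y (c.s y)
  f y := (c.f y).comp (coproj hfd B hB y)
  ne := c.ne
  s0 y hy := by rw [c.s0 y hy]; exact map_zero _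
  f0 y hy := by rw [c.f0 y hy, LinearMap.zero_comp]
  fs y hy := by
    refine Eq.trans ?_ (c.fs y hy)
    rw [LinearMap.comp_apply]
    congr 1
    apply Subtype.ext
    have h0 : proj hfd B hB y (restIncl M B y (c.s y)) = 0 := proj_rest hfd B hB y _ (c.s y).2
    change restIncl M B y (c.s y) - proj hfd B hB y (restIncl M B y (c.s y)) =
      restIncl M B y (c.s y)
    rw [h0, sub_zero]
  hs y z h hy := by
    rw [← c.hs y z h hy]
    rfl
  hf y z h hz m := by
    rw [LinearMap.comp_apply, LinearMap.comp_apply, ← c.hf y z h hz]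
    congr 1
    apply Subtype.ext
    change M.map h m - proj hfd B hB z (M.map h m) = M.map h (m - proj hfd B hB y m)
    rw [proj_natural, map_sub]

theorem exists_maximal {k : Type} [Field k] {S : Type} [LinearOrder S]
    (M : PersistenceModule k S) (hfd : ∀ x, FiniteDimensional k (M.V x)) :
    ∃ (B : Set (Bar M)) (hB : B.Pairwise Orth), ∀ y m, proj hfd B hB y m = m := by
  obtain ⟨B, hmax⟩ := zorn_subset {B : Set (Bar M) | B.Pairwise Orth} (by
    intro C hC hchain
    exact ⟨⋃₀ C, (Set.pairwise_sUnion hchain.directedOn).mpr fun a ha => hC ha,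
      fun s hs => Set.subset_sUnion_of_mem hs⟩)
  have hB : B.Pairwise Orth := hmax.prop
  refine ⟨B, hB, fun y m => ?_⟩
  by_contra hne
  have : ∀ x, FiniteDimensional k ((restMod M B).V x) := fun x => by
    have := hfd x
    exact inferInstanceAs (FiniteDimensional k (rest M B x))
  obtain ⟨c⟩ := exists_bar (restMod M B) this y
    (⟨m - proj hfd B hB y m, sub_proj_mem hfd B hB y m⟩ : rest M B y) (by
      intro h
      exact hne (sub_eq_zero.mp (congrArg Subtype.val h)).symm)
  have ho : ∀ b ∈ B, Orth (liftBar hfd B hB c) b := by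
    intro b hb z
    constructor
    · change c.f z (coproj hfd B hB z (b.s z)) = 0
      have : coproj hfd B hB z (b.s z) = 0 := by
        apply Subtype.ext
        change b.s z - proj hfd B hB z (b.s z) = 0
        rw [proj_s hfd B hB z b hb, sub_self]
      rw [this, map_zero]
    · exact mem_rest.mp (c.s z).2 b hb
  have hsymm : ∀ a b : Bar M, Orth a b → Orth b a := fun a b h z => ⟨(h z).2, (h z).1⟩
  have hin : (insert (liftBar hfd B hB c) B).Pairwise Orth := by
    rw [Set.pairwise_insert]
    exact ⟨hB, fun b hb _ => ⟨ho b hb, hsymm _ _ (ho b hb)⟩⟩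
  have hmem : liftBar hfd B hB c ∈ B :=
    hmax.le_of_ge hin (Set.subset_insert _ _) (Set.mem_insert _ _)
  obtain ⟨z, hz⟩ := c.ne
  have h1 := (ho _ hmem z).1
  rw [(liftBar hfd B hB c).fs z hz] at h1
  exact one_ne_zero h1

theorem Isomorphic.symm {k : Type} [Field k] {S : Type} [LinearOrder S]
    {M N : PersistenceModule k S} (h : Isomorphic M N) : Isomorphic N M := by
  obtain ⟨f, hf⟩ := h
  let e := fun x => LinearEquiv.ofBijective (f.app x) (hf x)
  refine ⟨⟨fun x => (e x).symm.toLinearMap, ?_⟩, fun x => (e x).symm.bijective⟩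
  intro x y h
  ext n
  obtain ⟨m, rfl⟩ := (e x).surjective n
  have h1 := LinearMap.congr_fun (f.natural h) m
  simp only [LinearMap.comp_apply, LinearEquiv.coe_coe, LinearEquiv.symm_apply_apply] at h1 ⊢
  rw [LinearEquiv.eq_symm_apply]
  exact h1.symm

end PMod

open PMod in
/-- Theorem 1.2: pointwise finite-dimensional persistence modules over a totally
ordered set decompose into interval modules. -/
theorem stmt1 {k : Type} [Field k] {S : Type} [LinearOrder S]
    (M : PersistenceModule k S) (hfd : ∀ x, FiniteDimensional k (M.V x)) :
    ∃ (ι : Type) (I : ι → Set S) (hI : ∀ i, IsIntervalLin (I i)),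
      Isomorphic M (directSum fun i => intervalModule k (I i) (hI i).2) := by
  classical
  obtain ⟨B, hB, hp⟩ := exists_maximal M hfd
  refine ⟨B, fun b => b.1.I, fun b => ⟨b.1.ne, b.1.convex⟩, Isomorphic.symm ?_⟩
  let G : ∀ (y : S) (b : B), kMod k b.1.I y →ₗ[k] M.V y := fun y b =>
    (LinearMap.toSpanSingleton k (M.V y) (b.1.s y)).comp (kMod k b.1.I y).subtype
  let L : ∀ y : S, (Π₀ b : B, kMod k b.1.I y) →ₗ[k] M.V y := fun y => DFinsupp.lsum k (G y)
  have hG : ∀ y b c, G y b c = (c : k) • b.1.s y := fun y b c => rfl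
  have hL : ∀ y b c, L y (DFinsupp.single b c) = (c : k) • b.1.s y := fun y b c => by
    simp [L, hG]
  refine ⟨⟨L, ?_⟩, ?_⟩
  · intro x y h
    apply DFinsupp.lhom_ext
    intro b (c : kMod k b.1.I x)
    change M.map h (L x (DFinsupp.single b c)) = L y (DFinsupp.mapRange.linearMap
      (fun b : B => intervalMap k b.1.I h) (DFinsupp.single b c))
    rw [DFinsupp.mapRange.linearMap_apply, DFinsupp.mapRange_single, hL, hL, map_smul]
    by_cases hx : x ∈ b.1.I
    · rw [b.1.hs x y h hx]
      by_cases hy : y ∈ b.1.I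
      · simp [intervalMap, hy]
      · simp [b.1.s0 y hy]
    · have : (c : k) = 0 := kMod_coe_eq_zero k hx c
      rw [this]
      by_cases hy : y ∈ b.1.I
      · simp [intervalMap, hy, this]
      · simp [b.1.s0 y hy]
  · intro y
    have hf : ∀ (b : B) (w : Π₀ b : B, kMod k b.1.I y), b.1.f y (L y w) = (w b : k) := by
      intro b w
      induction w using DFinsupp.induction with
      | h0 => simp
      | ha d c w _ _ ih =>
        rw [map_add, map_add, ih, hL, map_smul, DFinsupp.add_apply, Submodule.coe_add]
        congr 1
        by_cases hd : d = b
        · subst hd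
          rw [DFinsupp.single_eq_same]
          by_cases hy : y ∈ d.1.I
          · rw [d.1.fs y hy]; simp
          · rw [kMod_coe_eq_zero k hy c]; simp
        · have hne : b.1 ≠ d.1 := fun e => hd (Subtype.ext e.symm)
          rw [(hB b.2 d.2 hne y).1, DFinsupp.single_eq_of_ne (Ne.symm hd)]
          simp
    constructor
    · change Function.Injective (L y)
      intro w w' hw
      ext b
      rw [← hf b w, ← hf b w', hw]
    · change Function.Surjective (L y)
      intro m
      have h1 := hp y m
      rw [proj_apply hfd B hB y m _ le_rfl] at h1
      rw [← LinearMap.mem_range, ← h1]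
      refine Submodule.sum_mem _ fun b hb => ?_
      have hy : y ∈ b.1.I := by simpa using hb
      exact Submodule.smul_mem _ _ ⟨DFinsupp.single b (kGen k hy), by
        rw [hL]; simp [kGen]⟩
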